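/- Let n ≥ 4 and let C ⊂ ℝⁿ be a real algebraic set (the common zero locus of finitely many real polynomials) whose Hausdorff dimension is at most n − 4. Then the complement O := ℝⁿ ∖ C is nonempty, path-connected, simply connected, and has trivial second homotopy group; equivalently, the inclusion O → ℝⁿ induces isomorphisms π₀(O) ≅ π₀(ℝⁿ), π₁(O) ≅ π₁(ℝⁿ), and π₂(O) ≅ π₂(ℝⁿ). -/

import Mathlib

/-!
Statement 2: If `C ⊆ ℝⁿ` (n ≥ 4) is a real algebraic set of Hausdorff dimension at most
`n − 4`, then `O = ℝⁿ ∖ C` is nonempty, path-connected, simply connected, and has trivial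
second homotopy group.
-/

namespace Stmt2

open scoped ENNReal

/-!
Join two generalized loops in `O = E ∖ C` with `N` parameters by the straight-line homotopy in `E`,
and let `β` be a polynomial on the parameter space `V = ℝ × ℝᴺ` vanishing exactly where the homotopy
is prescribed. Approximating within `|β|` makes the homotopy smooth on `{β ≠ 0}` without changing it
on `{β = 0}`, even though the loops are merely continuous. Now add `β p` for a vector `p`: the
perturbed map `g + β p` hits `C` over `{β ≠ 0}` only if `p` lies in the image of `C × {β ≠ 0}`
under the locally Lipschitz map `(c, v) ↦ β(v)⁻¹ (c - g v)`. That image has Hausdorff dimension at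
most `dim C + dim V`, since the Hausdorff dimension of a product exceeds that of one factor by at
most the box-counting dimension of the other. So if `dim C + #N + 1 < dim E`, a generic `p` gives
a homotopy inside `O`.
-/

open MeasureTheory Set Filter Topology Metric Module
open scoped NNReal unitInterval Manifold ContDiff

section ProductDimension

variable {X Y : Type*} [EMetricSpace X] [EMetricSpace Y]

/-- The covering condition behind box-counting (upper Minkowski) dimension at most `m`, with an
explicit constant: at every scale `η ≤ 1`, at most `K / η ^ m` closed balls of radius `η` cover `B`.
The centres of the balls need not lie in `B`. -/
def HasBoxCountingBound (B : Set Y) (m K : ℝ≥0) : Prop :=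
  ∀ η : ℝ≥0, 0 < η → η ≤ 1 → ∃ T : Finset Y, IsCover η B T ∧ T.card * η ^ (m : ℝ) ≤ K

lemma mkMetric'_pre_prod_le_card_mul {B : Set Y} {T : Finset Y} {η : ℝ≥0} (hT : IsCover η B T)
    {s : Set X} (hs : ediam s ≤ η) {r : ℝ≥0∞} (hηr : 2 * η ≤ r) {p : ℝ} (hp : 0 ≤ p) :
    OuterMeasure.mkMetric'.pre (fun u : Set (X × Y) ↦ ediam u ^ p) r (s ×ˢ B) ≤
      T.card * (2 * η) ^ p := by
  set μ := OuterMeasure.mkMetric'.pre (fun u : Set (X × Y) ↦ ediam u ^ p) r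
  have cover : s ×ˢ B ⊆ ⋃ y ∈ T, s ×ˢ closedEBall y η := by
    rw [← prod_iUnion₂]
    exact prod_mono_right (isCover_iff_subset_iUnion_closedEBall.1 hT)
  have diam_le (y : Y) : ediam (s ×ˢ closedEBall y (η : ℝ≥0∞)) ≤ 2 * η :=
    ediam_le fun a ha b hb ↦ max_le
      (((edist_le_ediam_of_mem ha.1 hb.1).trans hs).trans (le_mul_of_one_le_left' one_le_two))
      ((edist_le_ediam_of_mem ha.2 hb.2).trans ediam_closedEBall_le)
  calc μ (s ×ˢ B) ≤ ∑ y ∈ T, μ (s ×ˢ closedEBall y η) :=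
        (measure_mono cover).trans (measure_biUnion_finset_le _ _)
    _ ≤ ∑ _y ∈ T, (2 * η : ℝ≥0∞) ^ p := Finset.sum_le_sum fun y _ ↦
        (OuterMeasure.mkMetric'.pre_le ((diam_le y).trans hηr)).trans
          (ENNReal.rpow_le_rpow (diam_le y) hp)
    _ = T.card * (2 * η) ^ p := by rw [Finset.sum_const, nsmul_eq_mul]

variable {B : Set Y} {m K : ℝ≥0}

lemma HasBoxCountingBound.mkMetric'_pre_prod_le (hB : HasBoxCountingBound B m K) (d : ℝ≥0)
    {r : ℝ≥0∞} {s : Set X} (hsr : ediam s < r / 2) (hs1 : ediam s < 1) :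
    OuterMeasure.mkMetric'.pre (fun u : Set (X × Y) ↦ ediam u ^ (d + m : ℝ)) r (s ×ˢ B) ≤
      K * 2 ^ (d + m : ℝ) * ediam s ^ (d : ℝ) := by
  set μ := OuterMeasure.mkMetric'.pre (fun u : Set (X × Y) ↦ ediam u ^ (d + m : ℝ)) r
  -- `ediam s` may vanish, so `B` is covered at scales `η` decreasing to it.
  have bound : ∀ η : ℝ≥0∞, ediam s < η → η < r / 2 → η < 1 →
      μ (s ×ˢ B) ≤ K * 2 ^ (d + m : ℝ) * η ^ (d : ℝ) := by
    intro η hsη hηr hη1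
    lift η to ℝ≥0 using hη1.ne_top
    have hη : η ≠ 0 := by rintro rfl; simp at hsη
    obtain ⟨T, hT, hTK⟩ := hB η (pos_iff_ne_zero.2 hη) (mod_cast hη1.le)
    have hTK' : (T.card : ℝ≥0∞) * (η : ℝ≥0∞) ^ (m : ℝ) ≤ K := by
      rw [← ENNReal.coe_rpow_of_ne_zero hη]; exact_mod_cast hTK
    calc μ (s ×ˢ B) ≤ T.card * (2 * η) ^ (d + m : ℝ) :=
          mkMetric'_pre_prod_le_card_mul hT hsη.le
            (by rw [mul_comm]; exact ENNReal.mul_le_of_le_div hηr.le) (by positivity)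
      _ = T.card * (η : ℝ≥0∞) ^ (m : ℝ) * 2 ^ (d + m : ℝ) * (η : ℝ≥0∞) ^ (d : ℝ) := by
          rw [ENNReal.mul_rpow_of_nonneg _ _ (by positivity),
            ENNReal.rpow_add (d : ℝ) m (mod_cast hη) ENNReal.coe_ne_top]
          ring
      _ ≤ K * 2 ^ (d + m : ℝ) * (η : ℝ≥0∞) ^ (d : ℝ) := by gcongr
  have : (𝓝[>] ediam s).NeBot := nhdsGT_neBot_of_exists_gt ⟨1, hs1⟩
  refine ge_of_tendsto (x := 𝓝[>] ediam s)
    (f := fun η : ℝ≥0∞ ↦ K * 2 ^ (d + m : ℝ) * η ^ (d : ℝ)) ?_ ?_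
  · exact (ENNReal.Tendsto.const_mul (ENNReal.continuous_rpow_const.tendsto _)
      (.inr (ENNReal.mul_ne_top ENNReal.coe_ne_top (by simp)))).mono_left nhdsWithin_le_nhds
  · filter_upwards [self_mem_nhdsWithin, nhdsWithin_le_nhds (Iio_mem_nhds hsr),
      nhdsWithin_le_nhds (Iio_mem_nhds hs1)] with η h₁ h₂ h₃ using bound η h₁ h₂ h₃

lemma HasBoxCountingBound.mkMetric_prod_le (hB : HasBoxCountingBound B m K) (hK : 0 < K)
    (d : ℝ≥0) (A : Set X) :
    OuterMeasure.mkMetric (fun t : ℝ≥0∞ ↦ t ^ (d + m : ℝ)) (A ×ˢ B) ≤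
      K * 2 ^ (d + m : ℝ) * OuterMeasure.mkMetric (fun t : ℝ≥0∞ ↦ t ^ (d : ℝ)) A := by
  set c : ℝ≥0∞ := K * 2 ^ (d + m : ℝ) with hc
  have hc0 : c ≠ 0 := by simp [hc, hK.ne']
  have hc' : c ≠ ⊤ := ENNReal.mul_ne_top ENNReal.coe_ne_top (by simp)
  suffices ∀ r > 0, OuterMeasure.mkMetric'.pre (fun u : Set (X × Y) ↦ ediam u ^ (d + m : ℝ)) r
      (A ×ˢ B) ≤ c * OuterMeasure.mkMetric (fun t : ℝ≥0∞ ↦ t ^ (d : ℝ)) A by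
    simpa only [OuterMeasure.mkMetric, OuterMeasure.mkMetric', OuterMeasure.iSup_apply,
      iSup_le_iff] using this
  intro r hr
  set μ := OuterMeasure.mkMetric'.pre (fun u : Set (X × Y) ↦ ediam u ^ (d + m : ℝ)) r
  let ν : OuterMeasure X := OuterMeasure.map Prod.fst (OuterMeasure.restrict (univ ×ˢ B) μ)
  have ν_apply (s : Set X) : ν s = μ (s ×ˢ B) := by
    simp only [ν, OuterMeasure.map_apply, OuterMeasure.restrict_apply]
    congr 1
    ext; simp
  obtain ⟨r₀, hr₀, hr₀r⟩ : ∃ r₀, 0 < r₀ ∧ r₀ < min (r / 2) 1 :=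
    exists_between (lt_min (ENNReal.div_pos hr.ne' (by simp)) one_pos)
  have ν_le : ν ≤ OuterMeasure.mkMetric (c • fun t : ℝ≥0∞ ↦ t ^ (d : ℝ)) :=
    OuterMeasure.le_mkMetric _ _ r₀ hr₀ fun s hs ↦ by
      rw [ν_apply]
      exact hB.mkMetric'_pre_prod_le d
        (hs.trans_lt (hr₀r.trans_le (min_le_left _ _)))
        (hs.trans_lt (hr₀r.trans_le (min_le_right _ _)))
  rw [OuterMeasure.mkMetric_smul _ hc' hc0] at ν_le
  exact (ν_apply A).symm.trans_le (ν_le A)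

lemma HasBoxCountingBound.dimH_prod_le (hB : HasBoxCountingBound B m K) (hK : 0 < K)
    (A : Set X) : dimH (A ×ˢ B) ≤ dimH A + m := by
  borelize X
  borelize (X × Y)
  refine le_of_forall_gt fun c hc ↦ ?_
  obtain ⟨d, hAd, hdc⟩ := ENNReal.lt_iff_exists_nnreal_btwn.1 (lt_tsub_iff_right.2 hc)
  have hA : OuterMeasure.mkMetric (fun t : ℝ≥0∞ ↦ t ^ (d : ℝ)) A = 0 := by
    rw [OuterMeasure.coe_mkMetric]
    exact hausdorffMeasure_of_dimH_lt hAd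
  have hAB : Measure.hausdorffMeasure ((d + m : ℝ≥0) : ℝ) (A ×ˢ B) = 0 := by
    rw [Measure.hausdorffMeasure, ← OuterMeasure.coe_mkMetric, NNReal.coe_add]
    exact le_zero_iff.1 ((hB.mkMetric_prod_le hK d A).trans_eq (by rw [hA, mul_zero]))
  refine (dimH_le_of_hausdorffMeasure_ne_top (hAB.trans_ne ENNReal.zero_ne_top)).trans_lt ?_
  rw [ENNReal.coe_add]
  exact lt_tsub_iff_right.1 hdc

end ProductDimension

section ProductVectorSpace

variable {X : Type*} [EMetricSpace X]

lemma hasBoxCountingBound_Icc_add_one {ι : Type*} [Fintype ι] (a : ι → ℝ) :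
    HasBoxCountingBound (Icc a (a + 1)) (Fintype.card ι) (2 ^ Fintype.card ι) := by
  classical
  intro η hη hη1
  rw [NNReal.coe_natCast]
  have hη' : (0 : ℝ) < η := hη
  set N := ⌊1 / (η : ℝ)⌋₊ + 1 with hN
  have hNη : N * η ≤ 2 := by
    have floor_mul_le : ⌊1 / (η : ℝ)⌋₊ * (η : ℝ) ≤ 1 :=
      (le_div_iff₀ hη').1 (Nat.floor_le (by positivity))
    have : N * (η : ℝ) ≤ 2 := by
      rw [hN, Nat.cast_add_one, add_one_mul]
      linarith [NNReal.coe_le_coe.2 hη1, NNReal.coe_one]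
    exact_mod_cast this
  refine ⟨(Fintype.piFinset fun _ : ι ↦ Finset.range N).image fun j i ↦ a i + j i * η, ?_, ?_⟩
  · rw [isCover_iff_subset_iUnion_closedBall]
    intro v hv
    simp only [Finset.coe_image, mem_iUnion, biUnion_image, Finset.mem_coe, Fintype.mem_piFinset,
      Finset.mem_range]
    have h0 (i : ι) : 0 ≤ v i - a i := sub_nonneg.2 (hv.1 i)
    have h1 (i : ι) : v i - a i ≤ 1 := sub_le_iff_le_add'.2 (hv.2 i)
    refine ⟨fun i ↦ ⌊(v i - a i) / η⌋₊, fun i ↦ ?_, ?_⟩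
    · rw [hN, Nat.lt_succ_iff]
      exact Nat.floor_le_floor (div_le_div_of_nonneg_right (h1 i) hη'.le)
    · rw [mem_closedBall, dist_pi_le_iff hη'.le]
      intro i
      have lower := (le_div_iff₀ hη').1 (Nat.floor_le (div_nonneg (h0 i) hη'.le))
      have upper := (div_lt_iff₀ hη').1 (Nat.lt_floor_add_one ((v i - a i) / η))
      rw [Real.dist_eq, abs_le]
      constructor <;> linarith
  · calc _ ≤ ((N ^ Fintype.card ι : ℕ) : ℝ≥0) * η ^ (Fintype.card ι : ℝ) := by
          gcongr
          exact Finset.card_image_le.trans_eq (by simp)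
      _ = (N * η) ^ Fintype.card ι := by rw [NNReal.rpow_natCast, mul_pow, Nat.cast_pow]
      _ ≤ 2 ^ Fintype.card ι := by gcongr

lemma dimH_prod_univ_pi_le {ι : Type*} [Fintype ι] (A : Set X) :
    dimH (A ×ˢ (univ : Set (ι → ℝ))) ≤ dimH A + Fintype.card ι := by
  have cubes : (univ : Set (ι → ℝ)) =
      ⋃ z : ι → ℤ, Icc (fun i ↦ (z i : ℝ)) ((fun i ↦ (z i : ℝ)) + 1) := by
    refine (eq_univ_of_forall fun v ↦ ?_).symm
    exact mem_iUnion.2 ⟨fun i ↦ ⌊v i⌋, fun i ↦ Int.floor_le _, fun i ↦ (Int.lt_floor_add_one _).le⟩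
  rw [cubes, prod_iUnion, dimH_iUnion]
  exact iSup_le fun z ↦ (hasBoxCountingBound_Icc_add_one _).dimH_prod_le (by positivity) A

lemma dimH_prod_univ_le {V : Type*} [NormedAddCommGroup V] [NormedSpace ℝ V]
    [FiniteDimensional ℝ V] (A : Set X) :
    dimH (A ×ˢ (univ : Set V)) ≤ dimH A + finrank ℝ V := by
  let e : (Fin (finrank ℝ V) → ℝ) ≃L[ℝ] V := ContinuousLinearEquiv.ofFinrankEq (by simp)
  have image_eq : A ×ˢ (univ : Set V) = Prod.map id e '' (A ×ˢ univ) := by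
    rw [prodMap_image_prod, image_id, image_univ, e.surjective.range_eq]
  rw [image_eq]
  calc _ ≤ dimH (A ×ˢ (univ : Set (Fin (finrank ℝ V) → ℝ))) :=
      (LipschitzWith.prod_fst.prodMk (e.lipschitz.comp LipschitzWith.prod_snd)).dimH_image_le _
    _ ≤ _ := by simpa using dimH_prod_univ_pi_le (ι := Fin (finrank ℝ V)) A

end ProductVectorSpace

section GeneralPosition

variable {V E : Type*} [NormedAddCommGroup V] [NormedSpace ℝ V] [FiniteDimensional ℝ V]
  [NormedAddCommGroup E] [NormedSpace ℝ E]

lemma exists_continuous_contDiffOn_dist_le {f : V → E} {β : V → ℝ} (hf : Continuous f)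
    (hβ : Continuous β) :
    ∃ g : V → E, Continuous g ∧ ContDiffOn ℝ ∞ g {v | β v ≠ 0} ∧ ∀ v, dist (g v) (f v) ≤ |β v| := by
  classical
  let U : TopologicalSpace.Opens V := ⟨{v | β v ≠ 0}, isOpen_ne_fun hβ continuous_const⟩
  have : ProperSpace V := FiniteDimensional.proper ℝ V
  have : LocallyCompactSpace U := U.isOpen.locallyCompactSpace
  have : SigmaCompactSpace U := sigmaCompactSpace_of_locallyCompact_secondCountable
  obtain ⟨g₀, hg₀, -⟩ := (hf.comp continuous_subtype_val).exists_contMDiff_approx (M := U) 𝓘(ℝ, V) ⊤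
    (hβ.abs.comp continuous_subtype_val) fun v ↦ abs_pos.2 v.2
  let g : V → E := fun v ↦ if hv : v ∈ U then g₀ ⟨v, hv⟩ else f v
  have g_restrict : (fun u : U ↦ g u) = g₀ := funext fun u ↦ dif_pos u.2
  have g_dist (v : V) : dist (g v) (f v) ≤ |β v| := by
    by_cases hv : v ∈ U
    · rw [show g v = g₀ ⟨v, hv⟩ from dif_pos hv]
      exact (hg₀ ⟨v, hv⟩).le
    · simp only [g, dif_neg hv, dist_self, abs_nonneg]
  have g_smooth (v : V) (hv : v ∈ U) : ContDiffAt ℝ ∞ g v := by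
    have := g₀.contMDiff ⟨v, hv⟩
    rw [← g_restrict] at this
    exact (contMDiffAt_subtype_iff.1 this).contDiffAt
  refine ⟨g, continuous_iff_continuousAt.2 fun v ↦ ?_, fun v hv ↦ (g_smooth v hv).contDiffWithinAt,
    g_dist⟩
  by_cases hv : v ∈ U
  · exact (g_smooth v hv).continuousAt
  · have hβv : β v = 0 := not_not.1 hv
    have hgf : Tendsto (fun w ↦ dist (f w) (g w)) (𝓝 v) (𝓝 0) :=
      squeeze_zero (fun _ ↦ dist_nonneg) (fun w ↦ (dist_comm _ _).trans_le (g_dist w))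
        (by simpa only [hβv, abs_zero] using hβ.abs.tendsto v)
    have hfv : Tendsto f (𝓝 v) (𝓝 (g v)) := by
      simpa only [g, dif_neg hv] using hf.tendsto v
    exact hfv.congr_dist hgf

variable [FiniteDimensional ℝ E]

lemma dense_setOf_forall_add_smul_notMem {C : Set E} {U : Set V} {g : V → E} {β : V → ℝ}
    (hU : IsOpen U) (hg : ContDiffOn ℝ 1 g U) (hβ : ContDiffOn ℝ 1 β U) (hβ0 : ∀ v ∈ U, β v ≠ 0)
    (hdim : dimH C + finrank ℝ V < finrank ℝ E) :
    Dense {p : E | ∀ v ∈ U, g v + β v • p ∉ C} := by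
  let solve : E × V → E := fun q ↦ (β q.2)⁻¹ • (q.1 - g q.2)
  have solve_locallyLipschitz : ∀ q ∈ C ×ˢ U, ∃ K : ℝ≥0, ∃ t ∈ 𝓝[C ×ˢ U] q,
      LipschitzOnWith K solve t := by
    rintro ⟨c, v⟩ ⟨-, hv⟩
    have hβv : ContDiffAt ℝ 1 β v := hβ.contDiffAt (hU.mem_nhds hv)
    have hgv : ContDiffAt ℝ 1 g v := hg.contDiffAt (hU.mem_nhds hv)
    have : ContDiffAt ℝ 1 solve (c, v) :=
      ((hβv.comp (c, v) contDiffAt_snd).inv (hβ0 v hv)).smul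
        (contDiffAt_fst.sub (hgv.comp (c, v) contDiffAt_snd))
    obtain ⟨K, t, ht, hK⟩ := this.exists_lipschitzOnWith
    exact ⟨K, t, mem_nhdsWithin_of_mem_nhds ht, hK⟩
  have dimH_lt : dimH (solve '' C ×ˢ U) < finrank ℝ E :=
    calc dimH (solve '' C ×ˢ U) ≤ dimH (C ×ˢ U) :=
          dimH_image_le_of_locally_lipschitzOn solve_locallyLipschitz
      _ ≤ dimH (C ×ˢ (univ : Set V)) := dimH_mono (prod_mono_right (subset_univ U))
      _ ≤ dimH C + finrank ℝ V := dimH_prod_univ_le C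
      _ < finrank ℝ E := hdim
  refine (dense_compl_of_dimH_lt_finrank dimH_lt).mono ?_
  intro p hp v hv hmem
  refine hp ⟨(g v + β v • p, v), ⟨hmem, hv⟩, ?_⟩
  simp only [solve, add_sub_cancel_left, inv_smul_smul₀ (hβ0 v hv)]

lemma exists_continuous_eq_and_notMem {C : Set E} {f : V → E} {β : V → ℝ} (hf : Continuous f)
    (hβ : ContDiff ℝ 1 β) (hdim : dimH C + finrank ℝ V < finrank ℝ E) :
    ∃ F : V → E, Continuous F ∧ (∀ v, β v = 0 → F v = f v) ∧ ∀ v, β v ≠ 0 → F v ∉ C := by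
  obtain ⟨g, hg, hg_smooth, hgf⟩ := exists_continuous_contDiffOn_dist_le hf hβ.continuous
  obtain ⟨p, hp⟩ := (dense_setOf_forall_add_smul_notMem
    (isOpen_ne_fun hβ.continuous continuous_const) (hg_smooth.of_le (by simp)) hβ.contDiffOn
    (fun _ ↦ id) hdim).nonempty
  refine ⟨fun v ↦ g v + β v • p, hg.add (hβ.continuous.smul continuous_const), fun v hv ↦ ?_, hp⟩
  have : g v = f v := dist_le_zero.1 ((hgf v).trans_eq (by rw [hv, abs_zero]))
  simp only [this, hv, zero_smul, add_zero]

end GeneralPosition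

section Homotopy

lemma genLoop_homotopic_of_ambient {N E : Type*} [TopologicalSpace E] {O : Set E} {x : O}
    {f g : GenLoop N O x} {F : I × (N → I) → E} (hF : Continuous F) (hO : ∀ q, F q ∈ O)
    (h0 : ∀ s, F (0, s) = f s) (h1 : ∀ s, F (1, s) = g s)
    (hb : ∀ t, ∀ s ∈ Cube.boundary N, F (t, s) = x) : GenLoop.Homotopic f g :=
  ⟨⟨⟨⟨fun q ↦ ⟨F q, hO q⟩, by fun_prop⟩, fun s ↦ Subtype.ext (h0 s), fun s ↦ Subtype.ext (h1 s)⟩,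
    fun t s hs ↦ Subtype.ext ((hb t s hs).trans (congrArg Subtype.val (f.2 s hs)).symm)⟩⟩

variable {N : Type*} [Fintype N]

/-- A polynomial on `ℝ × ℝᴺ` whose zeros in the cylinder `I × Iᴺ` are exactly the points where
a homotopy of generalized loops is prescribed: both ends and the sides. -/
def cylinderBump (q : ℝ × (N → ℝ)) : ℝ :=
  q.1 * (1 - q.1) * ∏ i, q.2 i * (1 - q.2 i)

lemma contDiff_cylinderBump {r : WithTop ℕ∞} : ContDiff ℝ r (cylinderBump (N := N)) := by
  unfold cylinderBump
  exact ContDiff.mul (by fun_prop) (contDiff_prod fun i _ ↦ by fun_prop)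

lemma cylinderBump_eq_zero_iff (t : I) (s : N → I) :
    cylinderBump ((t : ℝ), fun i ↦ (s i : ℝ)) = 0 ↔ t = 0 ∨ t = 1 ∨ s ∈ Cube.boundary N := by
  have hI (u : I) : (u : ℝ) * (1 - u) = 0 ↔ u = 0 ∨ u = 1 := by
    simp only [mul_eq_zero, sub_eq_zero, eq_comm (a := (1 : ℝ)), Icc.coe_eq_zero, Icc.coe_eq_one]
  simp only [cylinderBump, mul_eq_zero (a := (t : ℝ) * (1 - t)), hI, Finset.prod_eq_zero_iff,
    Finset.mem_univ, true_and, or_assoc, Cube.boundary, mem_ofPred_eq]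

variable {E : Type*} [NormedAddCommGroup E] [NormedSpace ℝ E] [FiniteDimensional ℝ E]

lemma genLoop_homotopic {O : Set E} (hdim : dimH Oᶜ + (Fintype.card N + 1 : ℕ) < finrank ℝ E)
    {x : O} (f g : GenLoop N O x) : GenLoop.Homotopic f g := by
  let clamp : (N → ℝ) → N → I := fun s i ↦ projIcc 0 1 zero_le_one (s i)
  have clamp_coe (s : N → I) : clamp (fun i ↦ (s i : ℝ)) = s := funext fun i ↦ projIcc_val _ _
  let straight : ℝ × (N → ℝ) → E := fun q ↦
    AffineMap.lineMap (f (clamp q.2) : E) (g (clamp q.2) : E) q.1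
  have hstraight : Continuous straight := by
    have hclamp : Continuous clamp :=
      continuous_pi fun i ↦ continuous_projIcc.comp (continuous_apply i)
    have ambient (h : GenLoop N O x) : Continuous fun q : ℝ × (N → ℝ) ↦ (h (clamp q.2) : E) :=
      (continuous_subtype_val.comp h.1.continuous).comp (hclamp.comp continuous_snd)
    exact (ambient f).lineMap (ambient g) continuous_fst
  obtain ⟨F, hF, F_eq, F_notMem⟩ := exists_continuous_eq_and_notMem (C := Oᶜ) hstraight
    contDiff_cylinderBump (by simpa [add_comm, add_assoc] using hdim)
  let H : I × (N → I) → E := fun q ↦ F ((q.1 : ℝ), fun i ↦ (q.2 i : ℝ))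
  have H_zero (s : N → I) : H (0, s) = f s := by
    simpa [H, straight, clamp_coe] using F_eq _ ((cylinderBump_eq_zero_iff 0 s).2 (.inl rfl))
  have H_one (s : N → I) : H (1, s) = g s := by
    simpa [H, straight, clamp_coe] using F_eq _ ((cylinderBump_eq_zero_iff 1 s).2 (.inr (.inl rfl)))
  have H_boundary (t : I) (s : N → I) (hs : s ∈ Cube.boundary N) : H (t, s) = x := by
    have hf : f s = x := f.2 s hs
    have hg : g s = x := g.2 s hs
    simpa [H, straight, clamp_coe, hf, hg] using
      F_eq _ ((cylinderBump_eq_zero_iff t s).2 (.inr (.inr hs)))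
  have H_mem : ∀ q, H q ∈ O := by
    rintro ⟨t, s⟩
    by_cases hts : cylinderBump ((t : ℝ), fun i ↦ (s i : ℝ)) = 0
    · rcases (cylinderBump_eq_zero_iff t s).1 hts with rfl | rfl | hs
      · exact H_zero s ▸ (f s).2
      · exact H_one s ▸ (g s).2
      · exact H_boundary t s hs ▸ x.2
    · exact not_not.1 (F_notMem _ hts)
  exact genLoop_homotopic_of_ambient (by fun_prop) H_mem H_zero H_one H_boundary

lemma subsingleton_homotopyGroup {O : Set E}
    (hdim : dimH Oᶜ + (Fintype.card N + 1 : ℕ) < finrank ℝ E) (x : O) :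
    Subsingleton (HomotopyGroup N O x) :=
  ⟨Quotient.ind₂ fun f g ↦ Quotient.sound (genLoop_homotopic hdim f g)⟩

end Homotopy

section LowDimensionalHomotopyGroups

variable {X : Type*} [TopologicalSpace X]

lemma pathConnectedSpace_of_subsingleton_homotopyGroup (x : X)
    [Subsingleton (HomotopyGroup (Fin 0) X x)] : PathConnectedSpace X :=
  pathConnectedSpace_iff_zerothHomotopy.2
    ⟨⟨Quotient.mk _ x⟩, (HomotopyGroup.pi0EquivZerothHomotopy (x := x)).symm.subsingleton⟩

lemma simplyConnectedSpace_of_subsingleton_homotopyGroup [PathConnectedSpace X]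
    [∀ x : X, Subsingleton (HomotopyGroup (Fin 1) X x)] : SimplyConnectedSpace X := by
  refine simply_connected_iff_loops_nullhomotopic.2 ⟨inferInstance, fun x γ ↦ ?_⟩
  have : Subsingleton (Path.Homotopic.Quotient x x) :=
    (HomotopyGroup.pi1EquivFundamentalGroup (x := x)).symm.subsingleton
  exact Quotient.exact (this.elim (Quotient.mk _ γ) (Quotient.mk _ (Path.refl x)))

end LowDimensionalHomotopyGroups

theorem complement_of_small_algebraic_set_highly_connected_general {E : Type*}
    [NormedAddCommGroup E] [NormedSpace ℝ E] [FiniteDimensional ℝ E] {C : Set E}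
    (hdim : dimH C + 3 < finrank ℝ E) :
    (Cᶜ).Nonempty ∧ IsPathConnected Cᶜ ∧ SimplyConnectedSpace ↥(Cᶜ) ∧
      ∀ x : ↥(Cᶜ), Subsingleton (HomotopyGroup (Fin 2) ↥(Cᶜ) x) := by
  have pi_trivial (k : ℕ) (hk : k ≤ 2) (x : ↥(Cᶜ)) :
      Subsingleton (HomotopyGroup (Fin k) ↥(Cᶜ) x) := by
    refine subsingleton_homotopyGroup (lt_of_le_of_lt ?_ hdim) x
    rw [compl_compl, Fintype.card_fin]
    gcongr
    exact_mod_cast Nat.succ_le_succ hk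
  obtain ⟨x, hx⟩ : (Cᶜ).Nonempty :=
    (dense_compl_of_dimH_lt_finrank (le_self_add.trans_lt hdim)).nonempty
  have := pi_trivial 0 zero_le_two ⟨x, hx⟩
  have := pi_trivial 1 one_le_two
  have : PathConnectedSpace ↥(Cᶜ) := pathConnectedSpace_of_subsingleton_homotopyGroup ⟨x, hx⟩
  exact ⟨⟨x, hx⟩, isPathConnected_iff_pathConnectedSpace.2 this,
    simplyConnectedSpace_of_subsingleton_homotopyGroup, pi_trivial 2 le_rfl⟩

theorem complement_of_small_algebraic_set_highly_connected
    (n : ℕ) (hn : 4 ≤ n) (C : Set (Fin n → ℝ))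
    (halg : ∃ S : Finset (MvPolynomial (Fin n) ℝ),
      C = {x | ∀ p ∈ S, MvPolynomial.eval x p = 0})
    (hdim : dimH C ≤ ((n - 4 : ℕ) : ℝ≥0∞)) :
    (Cᶜ).Nonempty ∧ IsPathConnected Cᶜ ∧ SimplyConnectedSpace ↥(Cᶜ) ∧
      ∀ x : ↥(Cᶜ), Subsingleton (HomotopyGroup (Fin 2) ↥(Cᶜ) x) := by
  refine complement_of_small_algebraic_set_highly_connected_general ?_
  calc dimH C + 3 ≤ ((n - 4 : ℕ) : ℝ≥0∞) + 3 := by gcongr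
    _ < n := by exact_mod_cast (by omega : n - 4 + 3 < n)
    _ = finrank ℝ (Fin n → ℝ) := by rw [finrank_fin_fun]

end Stmt2
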